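/- Let R = F_q[X;θ] be the skew polynomial ring with multiplication rule X·a = θ(a)X. Let f ∈ R be a polynomial of degree n ≥ 1 with nonzero constant term. Then there exists an integer m ≥ n such that X^m − 1 is a right multiple of f, i.e., X^m − 1 = f·q for some q ∈ R. Moreover one can take m ≤ q^n + n − 2. -/

import Mathlib

open Polynomial

/-- The `k`-th coefficient of the skew product `f * g` in the skew polynomial ring
`F[X;θ]`, where multiplication satisfies `X · a = θ(a) · X`, so that
`(f*g)_k = ∑_{i+j=k} f_i θ^i(g_j)`. -/
noncomputable def skewMulCoeff {F : Type*} [Field F] (θ : RingAut F)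
    (f g : Polynomial F) (k : ℕ) : F :=
  ∑ i ∈ Finset.range (k + 1), f.coeff i * (θ ^ i) (g.coeff (k - i))

section SkewMul

variable {F : Type*} [Field F] (θ : RingAut F)

theorem skewMulCoeff_add (f p q : F[X]) (k : ℕ) :
    skewMulCoeff θ f (p + q) k = skewMulCoeff θ f p k + skewMulCoeff θ f q k := by
  simp [skewMulCoeff, mul_add, Finset.sum_add_distrib]

theorem skewMulCoeff_neg (f p : F[X]) (k : ℕ) :
    skewMulCoeff θ f (-p) k = -skewMulCoeff θ f p k := by
  simp [skewMulCoeff]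

theorem skewMulCoeff_mul_X_succ (f p : F[X]) (k : ℕ) :
    skewMulCoeff θ f (p * X) (k + 1) = skewMulCoeff θ f p k := by
  unfold skewMulCoeff
  rw [Finset.sum_range_succ]
  simp only [Nat.sub_self, coeff_mul_X_zero, map_zero, mul_zero, add_zero]
  refine Finset.sum_congr rfl fun i hi => ?_
  rw [Nat.sub_add_comm (Finset.mem_range_succ_iff.mp hi), coeff_mul_X]

theorem skewMulCoeff_zero (f p : F[X]) :
    skewMulCoeff θ f p 0 = f.coeff 0 * p.coeff 0 := by
  simp [skewMulCoeff]

theorem skewMulCoeff_C (f : F[X]) (b : F) (k : ℕ) :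
    skewMulCoeff θ f (C b) k = f.coeff k * (θ ^ k) b := by
  unfold skewMulCoeff
  rw [Finset.sum_eq_single_of_mem k (Finset.self_mem_range_succ k)]
  · simp
  · intro i hi hik
    have hki : k - i ≠ 0 := by have := Finset.mem_range_succ_iff.mp hi; omega
    simp [coeff_C_of_ne_zero hki]

theorem skewMulCoeff_natDegree_add_natDegree (f p : F[X]) :
    skewMulCoeff θ f p (f.natDegree + p.natDegree) =
      f.leadingCoeff * (θ ^ f.natDegree) p.leadingCoeff := by
  unfold skewMulCoeff
  rw [Finset.sum_eq_single_of_mem f.natDegree (Finset.mem_range.mpr (by omega))]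
  · simp
  · intro i _ hi
    rcases lt_or_gt_of_ne hi with h | h
    · rw [coeff_eq_zero_of_natDegree_lt (p := p) (by omega), map_zero, mul_zero]
    · rw [coeff_eq_zero_of_natDegree_lt h, zero_mul]

/-- The right ideal `fR` of `R = F[X;θ]`, as an additive subgroup of the left normal forms. -/
def skewRightIdeal (f : F[X]) : AddSubgroup F[X] where
  carrier := {g | ∃ q : F[X], ∀ k, skewMulCoeff θ f q k = g.coeff k}
  zero_mem' := ⟨0, fun k => by simp [skewMulCoeff]⟩
  add_mem' := by
    rintro a b ⟨p, hp⟩ ⟨q, hq⟩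
    exact ⟨p + q, fun k => by rw [skewMulCoeff_add, hp, hq, coeff_add]⟩
  neg_mem' := by
    rintro a ⟨p, hp⟩
    exact ⟨-p, fun k => by rw [skewMulCoeff_neg, hp, coeff_neg]⟩

variable {θ} {f : F[X]}

theorem mul_X_mem_skewRightIdeal_iff (hf : f.coeff 0 ≠ 0) {g : F[X]} :
    g * X ∈ skewRightIdeal θ f ↔ g ∈ skewRightIdeal θ f := by
  constructor
  · rintro ⟨p, hp⟩
    have hp0 : p.coeff 0 = 0 := by
      have h := hp 0
      rw [skewMulCoeff_zero, coeff_mul_X_zero] at h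
      exact (mul_eq_zero.mp h).resolve_left hf
    have hpX : p.divX * X = p := by
      simpa [hp0] using divX_mul_X_add p
    refine ⟨p.divX, fun k => ?_⟩
    rw [← skewMulCoeff_mul_X_succ, hpX, hp, coeff_mul_X]
  · rintro ⟨p, hp⟩
    refine ⟨p * X, fun k => ?_⟩
    cases k with
    | zero => simp [skewMulCoeff_zero]
    | succ k => rw [skewMulCoeff_mul_X_succ, hp, coeff_mul_X]

theorem mul_X_pow_mem_skewRightIdeal_iff (hf : f.coeff 0 ≠ 0) {g : F[X]} (k : ℕ) :
    g * X ^ k ∈ skewRightIdeal θ f ↔ g ∈ skewRightIdeal θ f := by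
  induction k with
  | zero => simp
  | succ k ih => rw [pow_succ, ← mul_assoc, mul_X_mem_skewRightIdeal_iff hf, ih]

theorem natDegree_le_of_mem_skewRightIdeal {g : F[X]} (hg : g ∈ skewRightIdeal θ f)
    (hg0 : g ≠ 0) : f.natDegree ≤ g.natDegree := by
  obtain ⟨p, hp⟩ := hg
  have hf : f ≠ 0 := by
    rintro rfl
    exact hg0 (Polynomial.ext fun k => by rw [← hp]; simp [skewMulCoeff])
  have hp0 : p ≠ 0 := by
    rintro rfl
    exact hg0 (Polynomial.ext fun k => by rw [← hp]; simp [skewMulCoeff])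
  have h : g.coeff (f.natDegree + p.natDegree) ≠ 0 := by
    rw [← hp, skewMulCoeff_natDegree_add_natDegree]
    exact mul_ne_zero (leadingCoeff_ne_zero.mpr hf)
      ((map_ne_zero_iff _ (θ ^ f.natDegree).injective).mpr (leadingCoeff_ne_zero.mpr hp0))
  have := le_natDegree_of_ne_zero h
  omega

theorem exists_mem_degreeLT_X_pow_sub_mem_skewRightIdeal (hf : f.coeff 0 ≠ 0)
    (hn : 1 ≤ f.natDegree) (k : ℕ) :
    ∃ r ∈ degreeLT F f.natDegree, X ^ k - r ∈ skewRightIdeal θ f := by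
  have hlead : f.leadingCoeff ≠ 0 := leadingCoeff_ne_zero.mpr (by rintro rfl; simp at hf)
  induction k with
  | zero =>
    refine ⟨1, mem_degreeLT.mpr ?_, by simp [zero_mem]⟩
    rw [degree_one]
    exact_mod_cast hn
  | succ k ih =>
    obtain ⟨r, hr, hmem⟩ := ih
    obtain ⟨b, hb⟩ := (θ ^ f.natDegree).surjective (f.leadingCoeff⁻¹ * (r * X).coeff f.natDegree)
    let s : F[X] := ∑ j ∈ Finset.range (f.natDegree + 1), monomial j (f.coeff j * (θ ^ j) b)
    have hs (j : ℕ) : s.coeff j = f.coeff j * (θ ^ j) b := by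
      simp only [s, finsetSum_coeff, coeff_monomial, Finset.sum_ite_eq', Finset.mem_range]
      split_ifs with h
      · rfl
      · rw [coeff_eq_zero_of_natDegree_lt (by omega), zero_mul]
    have hsmem : s ∈ skewRightIdeal θ f := ⟨C b, fun j => by rw [skewMulCoeff_C, hs]⟩
    refine ⟨r * X - s, ?_, ?_⟩
    · rw [mem_degreeLT, degree_lt_iff_coeff_zero] at hr ⊢
      intro j hj
      rw [coeff_sub, hs]
      rcases hj.eq_or_lt with rfl | hj
      · rw [hb, coeff_natDegree, mul_inv_cancel_left₀ hlead, sub_self]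
      · obtain ⟨j, rfl⟩ := Nat.exists_eq_add_of_lt hj
        rw [coeff_eq_zero_of_natDegree_lt hj, coeff_mul_X, hr _ (by omega), zero_mul, sub_zero]
    · have := add_mem ((mul_X_mem_skewRightIdeal_iff hf).mpr hmem) hsmem
      convert this using 1
      ring

end SkewMul

/-- In `R = F_q[X;θ]`, for any `f` of degree `n ≥ 1` with nonzero constant
term, there is an integer `m` with `n ≤ m ≤ q^n + n − 2` such that `X^m − 1 = f·q`
for some `q ∈ R` (skew multiplication). -/
theorem exists_skew_right_multiple_X_pow_sub_one {F : Type*} [Field F] [Fintype F]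
    (θ : RingAut F) (f : Polynomial F) (n : ℕ) (hn : 1 ≤ n)
    (hdeg : f.natDegree = n) (hf0 : f.coeff 0 ≠ 0) :
    ∃ (m : ℕ) (q : Polynomial F), n ≤ m ∧ m ≤ Fintype.card F ^ n + n - 2 ∧
      ∀ k : ℕ, skewMulCoeff θ f q k = (X ^ m - 1 : Polynomial F).coeff k := by
  classical
  subst hdeg
  choose r hr hmem using
    exists_mem_degreeLT_X_pow_sub_mem_skewRightIdeal (θ := θ) hf0 hn
  have hr0 (k : ℕ) : r k ≠ 0 := by
    intro h
    have h1 : (1 : F[X]) ∈ skewRightIdeal θ f := by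
      rw [← mul_X_pow_mem_skewRightIdeal_iff hf0 k]
      simpa [h] using hmem k
    have := natDegree_le_of_mem_skewRightIdeal h1 one_ne_zero
    rw [natDegree_one] at this
    omega
  let c (k : ℕ) : Fin f.natDegree → F := degreeLTEquiv F f.natDegree ⟨r k, hr k⟩
  have hc0 (k : ℕ) : c k ≠ 0 := by
    simpa [c, Subtype.ext_iff] using hr0 k
  obtain ⟨i, hi, j, hj, hij, hcij⟩ := Finset.exists_ne_map_eq_of_card_lt_of_maps_to
    (s := Finset.range (Fintype.card F ^ f.natDegree))
    (t := Finset.univ.erase (0 : Fin f.natDegree → F)) (f := c)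
    (by
      rw [Finset.card_erase_of_mem (Finset.mem_univ _), Finset.card_univ, Finset.card_range,
        Fintype.card_fun, Fintype.card_fin]
      exact Nat.sub_lt (pow_pos Fintype.card_pos _) one_pos)
    (fun k _ => by simpa using hc0 k)
  wlog hlt : i < j generalizing i j
  · exact this j hj i hi hij.symm hcij.symm (by omega)
  rw [Finset.mem_range] at hi hj
  have hrij : r i = r j :=
    congrArg Subtype.val ((degreeLTEquiv F f.natDegree).injective hcij)
  have hX : (X ^ (j - i) - 1 : F[X]) ∈ skewRightIdeal θ f := by
    rw [← mul_X_pow_mem_skewRightIdeal_iff hf0 i, sub_mul, ← pow_add, one_mul,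
      Nat.sub_add_cancel hlt.le]
    simpa [hrij] using sub_mem (hmem j) (hmem i)
  have hle := natDegree_le_of_mem_skewRightIdeal hX (X_pow_sub_C_ne_zero (by omega) 1)
  rw [← C_1, natDegree_X_pow_sub_C] at hle
  obtain ⟨q, hq⟩ := hX
  exact ⟨j - i, q, hle, by omega, hq⟩
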